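/- arXiv:1308.6260 — 2 statements merged into one kernel-verified Lean document; each statement's English description precedes it below -/
import Mathlib

section
/- (Corollary: the state |FS, p0⟩ is the ground state of the noninteracting Hamiltonian in its total-momentum sector.) Let N be an odd integer with N ≥ 3, let L, m_i, m_h be positive reals, set δk = 2π/L, k_F = δk(N−1)/2, q0 = min(k_F, (m_i/m_h)·k_F), and C = (k_F²/(6m_h))·N(N+1)/(N−1). Let p0 be a real number with 0 ≤ p0 < q0. Let S be a finite set of integers with card S = N, define E⁰_K = (δk²/(2m_h))·Σ_{n∈S} n² − C, and let k be a real number such that δk·(Σ_{n∈S} n) + k = p0. Then E⁰_K + k²/(2m_i) ≥ p0²/(2m_i); i.e., no noninteracting eigenstate with total momentum p0 has energy below that of the Fermi sea together with the impurity plane wave of momentum p0. -/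
/-!
Write `N = 2m + 1` and measure momenta in units of `δk`, so that the Fermi sea is `[-m, m]`. Let `P`
be the total momentum of `S` and `Q` the excess of `∑ n ∈ S, n²` over the Fermi sea. Pairing the
particles of `S` with its holes, each pair `(p, h)` contributes `p² - h²` to `Q` and `p - h` to `P`.
Let `f` be the `(N + 1)`-periodic function equal to `x (N + 1 - x)` on one period. Then
`f (p - h) ≤ p² - h²` for every pair, and `f` is subadditive, so `f P ≤ Q`. Since `f` is even,
nonnegative and dominates its defining parabola, `Q ≥ 0` and `(N + 1) |P| ≤ Q + P²`.

Transferring momentum `δk P` from the impurity to the fermions raises the energy by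
`δk² (m_i Q + m_h P²) / (2 m_h m_i) - δk p0 P / m_i`. Here
`m_i Q + m_h P² ≥ min m_i m_h * (Q + P²) ≥ min m_i m_h * (N + 1) |P|`, which beats the linear term
as long as `|p0| ≤ min 1 (m_i / m_h) * (kF + δk)`, where `kF + δk = δk (N + 1) / 2` is the first
momentum above the Fermi sea.
-/

theorem sum_sub_sum_eq_sum_equiv {ι κ M : Type*} [AddCommGroup M] {A : Finset ι} {B : Finset κ}
    (e : A ≃ B) (u : ι → M) (v : κ → M) :
    ∑ a ∈ A, u a - ∑ b ∈ B, v b = ∑ a : A, (u a - v (e a)) := by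
  rw [Finset.sum_sub_distrib, e.sum_comp fun b : B ↦ v b, Finset.sum_coe_sort, Finset.sum_coe_sort]

theorem apply_sum_sub_sum_le_of_subadditive {M R : Type*} [AddCommGroup M] [AddCommGroup R]
    [PartialOrder R] [IsOrderedAddMonoid R] {f g : M → R} (hf_zero : f 0 ≤ 0)
    (hf_add : ∀ x y, f (x + y) ≤ f x + f y) {A B : Finset M} (hcard : A.card = B.card)
    (hfg : ∀ a ∈ A, ∀ b ∈ B, f (a - b) ≤ g a - g b) :
    f (∑ a ∈ A, a - ∑ b ∈ B, b) ≤ ∑ a ∈ A, g a - ∑ b ∈ B, g b := by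
  let e : A ≃ B := Finset.equivOfCardEq hcard
  calc
    f (∑ a ∈ A, a - ∑ b ∈ B, b) = f (∑ a : A, ((a : M) - e a)) := by
      rw [sum_sub_sum_eq_sum_equiv e (fun a ↦ a) fun b ↦ b]
    _ ≤ ∑ a : A, f (a - e a) := Finset.le_sum_of_subadditive f hf_zero hf_add _ _
    _ ≤ ∑ a : A, (g a - g (e a)) := Finset.sum_le_sum fun a _ ↦ hfg a a.2 (e a) (e a).2
    _ = ∑ a ∈ A, g a - ∑ b ∈ B, g b := (sum_sub_sum_eq_sum_equiv e g g).symm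

/-- The `N`-periodic function equal to `x (N - x)` on `[0, N)`; it bounds from below the energy cost
of an excitation of momentum `x`. -/
def periodicParabola (N x : ℤ) : ℤ := (x % N) * (N - x % N)

section PeriodicParabola

variable {N : ℤ}

@[simp]
theorem periodicParabola_zero_right (N : ℤ) : periodicParabola N 0 = 0 := by
  simp [periodicParabola]

theorem periodicParabola_eq_of_lt {x : ℤ} (hx : 0 ≤ x) (hxN : x < N) :
    periodicParabola N x = x * (N - x) := by
  rw [periodicParabola, Int.emod_eq_of_lt hx hxN]

theorem periodicParabola_nonneg (hN : 0 < N) (x : ℤ) : 0 ≤ periodicParabola N x :=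
  mul_nonneg (Int.emod_nonneg x hN.ne') (sub_nonneg.2 (Int.emod_lt_of_pos x hN).le)

theorem periodicParabola_neg (hN : 0 < N) (x : ℤ) :
    periodicParabola N (-x) = periodicParabola N x := by
  unfold periodicParabola
  rw [Int.neg_emod]
  split_ifs with hdvd
  · simp [Int.emod_eq_zero_of_dvd hdvd]
  · rw [Int.natAbs_of_nonneg hN.le]
    ring

theorem periodicParabola_abs (hN : 0 < N) (x : ℤ) :
    periodicParabola N |x| = periodicParabola N x := by
  rcases abs_choice x with hx | hx <;> simp only [hx, periodicParabola_neg hN]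

theorem mul_sub_le_periodicParabola (hN : 0 < N) (x : ℤ) : x * (N - x) ≤ periodicParabola N x := by
  by_cases hx : 0 ≤ x ∧ x < N
  · exact (periodicParabola_eq_of_lt hx.1 hx.2).ge
  · refine le_trans ?_ (periodicParabola_nonneg hN x)
    rcases lt_or_ge x 0 with hx₀ | hx₀
    · exact mul_nonpos_of_nonpos_of_nonneg hx₀.le (by lia)
    · exact mul_nonpos_of_nonneg_of_nonpos hx₀ (by lia)

theorem periodicParabola_add_le (hN : 0 < N) (x y : ℤ) :
    periodicParabola N (x + y) ≤ periodicParabola N x + periodicParabola N y := by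
  unfold periodicParabola
  rw [Int.add_emod]
  have hr := Int.emod_nonneg x hN.ne'
  have hrN := Int.emod_lt_of_pos x hN
  have hs := Int.emod_nonneg y hN.ne'
  have hsN := Int.emod_lt_of_pos y hN
  generalize x % N = r at *
  generalize y % N = s at *
  rcases lt_or_ge (r + s) N with hlt | hge
  · rw [Int.emod_eq_of_lt (by lia) hlt]
    linarith [mul_nonneg hr hs]
  · have hwrap : (r + s) % N = r + s - N := by
      rw [← Int.sub_emod_right, Int.emod_eq_of_lt (by lia) (by lia)]
    rw [hwrap]
    linarith [mul_nonneg (sub_nonneg.2 hrN.le) (sub_nonneg.2 hsN.le)]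

theorem periodicParabola_sub_le_sq_sub_sq_of_nonneg {p h : ℤ} (hN : 0 < N) (hp : N ≤ 2 * p)
    (hh : 2 * |h| ≤ N) : periodicParabola N (p - h) ≤ p ^ 2 - h ^ 2 := by
  obtain ⟨hh_neg, hh_pos⟩ := abs_le.1 (show |2 * h| ≤ N by simpa [abs_mul] using hh)
  rw [sq_sub_sq, mul_comm]
  rcases lt_or_ge (p - h) N with hlt | hge
  · rw [periodicParabola_eq_of_lt (by lia) hlt]
    exact mul_le_mul_of_nonneg_left (by lia) (by lia)
  · have hr := Int.emod_nonneg (p - h) hN.ne'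
    have hdiv : 1 ≤ (p - h) / N := (Int.le_ediv_iff_mul_le hN).2 (by lia)
    have hr_le : (p - h) % N ≤ p + h := calc
      (p - h) % N = p - h - N * ((p - h) / N) := Int.emod_def _ _
      _ ≤ p - h - N := sub_le_sub_left (le_mul_of_one_le_right hN.le hdiv) _
      _ ≤ p + h := by lia
    calc
      periodicParabola N (p - h) ≤ (p - h) % N * N := mul_le_mul_of_nonneg_left (by lia) hr
      _ ≤ (p + h) * (p - h) := mul_le_mul hr_le hge hN.le (hr.trans hr_le)
      _ = (p - h) * (p + h) := mul_comm _ _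

theorem periodicParabola_sub_le_sq_sub_sq {p h : ℤ} (hN : 0 < N) (hp : N ≤ 2 * |p|)
    (hh : 2 * |h| ≤ N) : periodicParabola N (p - h) ≤ p ^ 2 - h ^ 2 := by
  rcases abs_choice p with habs | habs <;> rw [habs] at hp
  · exact periodicParabola_sub_le_sq_sub_sq_of_nonneg hN hp hh
  · have := periodicParabola_sub_le_sq_sub_sq_of_nonneg (h := -h) hN hp (by rwa [abs_neg])
    rwa [← neg_sub', periodicParabola_neg hN, neg_sq, neg_sq] at this

end PeriodicParabola

/-- The momenta, in units of `δk`, occupied in the ground state of `2 m + 1` fermions. -/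
noncomputable def fermiSea (m : ℕ) : Finset ℤ := Finset.Icc (-(m : ℤ)) m

/-- The energy of the configuration `S` of `2 m + 1` fermions above that of the Fermi sea, in units
of `δk² / (2 m_h)`. -/
noncomputable def excitationEnergy (m : ℕ) (S : Finset ℤ) : ℤ :=
  ∑ n ∈ S, n ^ 2 - ∑ n ∈ fermiSea m, n ^ 2

section FermiSea

variable {m : ℕ}

theorem mem_fermiSea {n : ℤ} : n ∈ fermiSea m ↔ |n| ≤ m := by
  rw [fermiSea, Finset.mem_Icc, abs_le]

theorem card_fermiSea (m : ℕ) : (fermiSea m).card = 2 * m + 1 := by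
  rw [fermiSea, Int.card_Icc]
  lia

theorem sum_fermiSea (m : ℕ) : ∑ n ∈ fermiSea m, n = 0 := by
  induction m with
  | zero => simp [fermiSea]
  | succ m ih =>
    rw [fermiSea] at *
    rw [Nat.cast_succ, Finset.sum_Icc_succ_eq_add_endpoints, ih]
    ring

theorem sum_fermiSea_sq (m : ℕ) :
    3 * ∑ n ∈ fermiSea m, n ^ 2 = (m * (m + 1) * (2 * m + 1) : ℤ) := by
  induction m with
  | zero => simp [fermiSea]
  | succ m ih =>
    rw [fermiSea] at *
    rw [Nat.cast_succ, Finset.sum_Icc_succ_eq_add_endpoints, mul_add, ih]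
    ring

theorem fermiSea_energy_eq (hm : 0 < m) (δ m_h : ℝ) :
    δ ^ 2 / (2 * m_h) * (∑ n ∈ fermiSea m, n ^ 2 : ℤ) =
      (δ * m) ^ 2 / (6 * m_h) * ((2 * m + 1) * (2 * m + 2) / (2 * m)) := by
  have hsum : (3 * (∑ n ∈ fermiSea m, n ^ 2 : ℤ) : ℝ) = m * (m + 1) * (2 * m + 1) := by
    exact_mod_cast sum_fermiSea_sq m
  rw [eq_div_of_mul_eq three_ne_zero ((mul_comm _ _).trans hsum)]
  field_simp
  ring

variable {S : Finset ℤ}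

theorem periodicParabola_sum_le_excitationEnergy (hS : S.card = 2 * m + 1) :
    periodicParabola (2 * (m + 1)) (∑ n ∈ S, n) ≤ excitationEnergy m S := by
  have hN : (0 : ℤ) < 2 * (m + 1) := by lia
  have hpair : ∀ p ∈ S \ fermiSea m, ∀ h ∈ fermiSea m \ S,
      periodicParabola (2 * (m + 1)) (p - h) ≤ p ^ 2 - h ^ 2 := by
    intro p hp h hh
    rw [Finset.mem_sdiff, mem_fermiSea] at hp hh
    exact periodicParabola_sub_le_sq_sub_sq hN (by lia) (by lia)
  have := apply_sum_sub_sum_le_of_subadditive (periodicParabola_zero_right _).le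
    (periodicParabola_add_le hN)
    (Finset.card_sdiff_comm (hS.trans (card_fermiSea m).symm)) hpair
  rwa [Finset.sum_sdiff_sub_sum_sdiff, Finset.sum_sdiff_sub_sum_sdiff, sum_fermiSea,
    sub_zero] at this

theorem excitationEnergy_nonneg (hS : S.card = 2 * m + 1) : 0 ≤ excitationEnergy m S :=
  (periodicParabola_nonneg (by lia) _).trans (periodicParabola_sum_le_excitationEnergy hS)

theorem mul_abs_sum_le_excitationEnergy_add_sq (hS : S.card = 2 * m + 1) :
    2 * (m + 1) * |∑ n ∈ S, n| ≤ excitationEnergy m S + (∑ n ∈ S, n) ^ 2 := by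
  have hN : (0 : ℤ) < 2 * (m + 1) := by lia
  set P := ∑ n ∈ S, n
  have hparabola : |P| * (2 * (m + 1) - |P|) ≤ excitationEnergy m S := calc
    _ ≤ periodicParabola (2 * (m + 1)) |P| := mul_sub_le_periodicParabola hN _
    _ = periodicParabola (2 * (m + 1)) P := periodicParabola_abs hN P
    _ ≤ excitationEnergy m S := periodicParabola_sum_le_excitationEnergy hS
  linarith [sq_abs P]

end FermiSea

theorem min_mul_add_le {α : Type*} [Semiring α] [LinearOrder α] [IsOrderedRing α]
    {a b x y : α} (hx : 0 ≤ x) (hy : 0 ≤ y) : min a b * (x + y) ≤ a * x + b * y := by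
  rw [mul_add]
  gcongr
  exacts [min_le_left a b, min_le_right a b]

theorem kinetic_energy_le_of_momentum_transfer {m_i m_h δ c p₀ P Q : ℝ} (hmi : 0 < m_i)
    (hmh : 0 < m_h) (hδ : 0 ≤ δ) (hQ : 0 ≤ Q) (hPQ : 2 * c * |P| ≤ Q + P ^ 2)
    (hp₀ : |p₀| ≤ min (δ * c) (m_i / m_h * (δ * c))) :
    p₀ ^ 2 / (2 * m_i) ≤ δ ^ 2 / (2 * m_h) * Q + (p₀ - δ * P) ^ 2 / (2 * m_i) := by
  obtain ⟨hp₀_h, hp₀_i⟩ := le_min_iff.1 hp₀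
  have hp₀_min : m_h * |p₀| ≤ min m_i m_h * (δ * c) := by
    rcases min_choice m_i m_h with hmin | hmin <;> rw [hmin]
    · rwa [div_mul_eq_mul_div, le_div_iff₀' hmh] at hp₀_i
    · gcongr
  have htransfer : 2 * m_h * (p₀ * P) ≤ δ * (m_i * Q + m_h * P ^ 2) := calc
    2 * m_h * (p₀ * P) ≤ 2 * m_h * (|p₀| * |P|) := by
      rw [← abs_mul]
      gcongr
      exact le_abs_self _
    _ = m_h * |p₀| * (2 * |P|) := by ring
    _ ≤ min m_i m_h * (δ * c) * (2 * |P|) := by gcongr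
    _ = δ * (min m_i m_h * (2 * c * |P|)) := by ring
    _ ≤ δ * (min m_i m_h * (Q + P ^ 2)) := by gcongr
    _ ≤ δ * (m_i * Q + m_h * P ^ 2) := by
      gcongr
      exact min_mul_add_le hQ (sq_nonneg P)
  have hdiff : δ ^ 2 / (2 * m_h) * Q + (p₀ - δ * P) ^ 2 / (2 * m_i) - p₀ ^ 2 / (2 * m_i) =
      δ * (δ * (m_i * Q + m_h * P ^ 2) - 2 * m_h * (p₀ * P)) / (2 * m_h * m_i) := by
    field_simp
    ring
  rw [← sub_nonneg, hdiff]
  have := sub_nonneg.2 htransfer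
  positivity

theorem fermi_sea_plus_impurity_is_ground_state_in_sector_general
    (N : ℤ) (hN : 3 ≤ N) (hodd : Odd N)
    (L m_i m_h : ℝ) (hL : 0 < L) (hmi : 0 < m_i) (hmh : 0 < m_h)
    (δk kF C : ℝ)
    (hδk : δk = 2 * Real.pi / L)
    (hkF : kF = δk * (N - 1) / 2)
    (hC : C = kF ^ 2 / (6 * m_h) * (N * (N + 1) / (N - 1)))
    (p0 : ℝ) (hp0 : |p0| ≤ min (kF + δk) (m_i / m_h * (kF + δk)))
    (S : Finset ℤ) (hcard : (S.card : ℤ) = N)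
    (E0K k : ℝ)
    (hE0K : E0K = δk ^ 2 / (2 * m_h) * (∑ n ∈ S, (n : ℝ) ^ 2) - C)
    (hmom : δk * (∑ n ∈ S, (n : ℝ)) + k = p0) :
    p0 ^ 2 / (2 * m_i) ≤ E0K + k ^ 2 / (2 * m_i) := by
  obtain ⟨m, hm⟩ : ∃ m : ℕ, N = 2 * m + 1 := by
    obtain ⟨j, rfl⟩ := hodd
    exact ⟨j.toNat, by lia⟩
  have hS : S.card = 2 * m + 1 := by lia
  have hm_pos : 0 < m := by lia
  have hδ : 0 ≤ δk := by rw [hδk]; positivity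
  have hkF_add : kF + δk = δk * (m + 1) := by rw [hkF, hm]; push_cast; ring
  have hC_sea : C = δk ^ 2 / (2 * m_h) * (∑ n ∈ fermiSea m, n ^ 2 : ℤ) := by
    rw [fermiSea_energy_eq hm_pos, hC, hkF, hm]
    push_cast
    congr 2 <;> ring
  have hE : E0K = δk ^ 2 / (2 * m_h) * excitationEnergy m S := by
    rw [hE0K, hC_sea, excitationEnergy]
    push_cast
    ring
  have hk : k = p0 - δk * (∑ n ∈ S, n : ℤ) := by push_cast; linarith
  rw [hE, hk]
  exact kinetic_energy_le_of_momentum_transfer hmi hmh hδ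
    (by exact_mod_cast excitationEnergy_nonneg hS)
    (by exact_mod_cast mul_abs_sum_le_excitationEnergy_add_sq hS) (hkF_add ▸ hp0)

/-- Corollary: `|FS, p0⟩` is the ground state of the noninteracting Hamiltonian
in the total-momentum-`p0` sector. For `N` odd fermions on a ring with
`δk = 2π/L`, `k_F = δk (N−1)/2`, `q0 = min (k_F, (m_i/m_h) k_F)` and
`C = (k_F²/(6 m_h)) N(N+1)/(N−1)`, any noninteracting eigenstate `|K, k⟩`
(fermion configuration `S ⊂ ℤ`, `|S| = N`, impurity momentum `k`) with total
momentum `p0 ∈ [0, q0)` has energy `E⁰_K + k²/(2 m_i) ≥ p0²/(2 m_i)`, the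
energy of the Fermi sea plus impurity plane wave `p0`. -/
theorem fermi_sea_plus_impurity_is_ground_state_in_sector
    (N : ℤ) (hN : 3 ≤ N) (hodd : Odd N)
    (L m_i m_h : ℝ) (hL : 0 < L) (hmi : 0 < m_i) (hmh : 0 < m_h)
    (δk kF q0 C : ℝ)
    (hδk : δk = 2 * Real.pi / L)
    (hkF : kF = δk * (N - 1) / 2)
    (hq0 : q0 = min kF (m_i / m_h * kF))
    (hC : C = kF ^ 2 / (6 * m_h) * (N * (N + 1) / (N - 1)))
    (p0 : ℝ) (hp0_nonneg : 0 ≤ p0) (hp0_lt : p0 < q0)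
    (S : Finset ℤ) (hcard : (S.card : ℤ) = N)
    (E0K k : ℝ)
    (hE0K : E0K = δk ^ 2 / (2 * m_h) * (∑ n ∈ S, (n : ℝ) ^ 2) - C)
    (hmom : δk * (∑ n ∈ S, (n : ℝ)) + k = p0) :
    p0 ^ 2 / (2 * m_i) ≤ E0K + k ^ 2 / (2 * m_i) := by
  have hδ : 0 ≤ δk := by rw [hδk]; positivity
  refine fermi_sea_plus_impurity_is_ground_state_in_sector_general N hN hodd L m_i m_h hL hmi hmh
    δk kF C hδk hkF hC p0 ?_ S hcard E0K k hE0K hmom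
  rw [abs_of_nonneg hp0_nonneg]
  exact hp0_lt.le.trans (hq0 ▸ by gcongr <;> linarith)
end

section
/- (Abstract form of the main Theorem's lower bound, diagonal-ensemble version.) Let E be a finite-dimensional complex inner product space. Let H⁰, V, P : E → E be self-adjoint linear maps, and set H = H⁰ + V. Suppose (e_α) is an orthonormal basis of E consisting of joint eigenvectors: H⁰ e_α = ε_α e_α and P e_α = p_α e_α with real ε_α, p_α. Let ψ be a unit vector with H⁰ ψ = ε₀ ψ and P ψ = p0 ψ for reals ε₀, p0. Let λ > 0 and assume that p0 − p_α ≤ λ·(ε_α − ε₀) for every α. Let (Ψ_j) be an orthonormal basis of E with H Ψ_j = E_j Ψ_j for reals E_j, and define p_∞ = Σ_j |⟨ψ, Ψ_j⟩|² ⟨Ψ_j, P Ψ_j⟩. Then p_∞ ≥ p0 − λ·( ⟨ψ, V ψ⟩ − Σ_j |⟨ψ, Ψ_j⟩|² ⟨Ψ_j, V Ψ_j⟩ ). -/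
open scoped InnerProductSpace

/-!
In the diagonal ensemble of `ψ` over an eigenbasis of `H = H⁰ + V`, the mean of `H` is exactly
`⟨ψ, H ψ⟩`, so by additivity the mean of `H⁰` exceeds `ε₀` by precisely what `V` loses:
`⟨ψ, V ψ⟩` minus the mean of `V`. The inequality `p0 - p_α ≤ λ (ε_α - ε₀)` between joint
eigenvalues passes to the expectations of `P` and `H⁰` in every `Ψ_j`, since these are averages
over the joint eigenbasis, and then to the means over the ensemble.
-/

section DiagonalAverage

variable {𝕜 E ι : Type*} [RCLike 𝕜] [NormedAddCommGroup E] [InnerProductSpace 𝕜 E]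

theorem inner_map_self_of_map_eq_smul {A : E →ₗ[𝕜] E} {a : 𝕜} {x : E} (hA : A x = a • x)
    (hx : ‖x‖ = 1) : ⟪x, A x⟫_𝕜 = a := by
  rw [hA, inner_smul_right, inner_self_eq_one_of_norm_eq_one hx, mul_one]

variable [Fintype ι]

/-- The diagonal-ensemble average of `A` in the state `x`, relative to an orthonormal basis `b`:
the expectations of `A` in the basis vectors, weighted by the probabilities `|⟨x, b i⟩|²`.
When `b` is an eigenbasis of a Hamiltonian with simple spectrum, this is the infinite-time average
of the expectation of `A` along the evolution of `x`. Only real parts are kept, as expectations of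
self-adjoint operators are real. -/
noncomputable def diagonalAverage (b : OrthonormalBasis ι 𝕜 E) (x : E) (A : E →ₗ[𝕜] E) : ℝ :=
  ∑ i, ‖⟪x, b i⟫_𝕜‖ ^ 2 * RCLike.re ⟪b i, A (b i)⟫_𝕜

theorem diagonalAverage_add (b : OrthonormalBasis ι 𝕜 E) (x : E) (A B : E →ₗ[𝕜] E) :
    diagonalAverage b x (A + B) = diagonalAverage b x A + diagonalAverage b x B := by
  simp only [diagonalAverage, LinearMap.add_apply, inner_add_right, map_add, mul_add,
    Finset.sum_add_distrib]

theorem diagonalAverage_eq_re_inner (b : OrthonormalBasis ι 𝕜 E) {A : E →ₗ[𝕜] E} {a : ι → 𝕜}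
    (hA : ∀ i, A (b i) = a i • b i) (x : E) :
    diagonalAverage b x A = RCLike.re ⟪x, A x⟫_𝕜 := by
  have map_eq_sum : A x = ∑ i, (⟪b i, x⟫_𝕜 * a i) • b i := by
    conv_lhs => rw [← b.sum_repr' x]
    simp only [map_sum, map_smul, hA, smul_smul]
  have inner_mul_inner_swap (i : ι) :
      ⟪b i, x⟫_𝕜 * ⟪x, b i⟫_𝕜 = ((‖⟪x, b i⟫_𝕜‖ ^ 2 : ℝ) : 𝕜) := by
    rw [← inner_conj_symm (b i) x, RCLike.conj_mul, RCLike.ofReal_pow]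
  rw [map_eq_sum, inner_sum, map_sum, diagonalAverage]
  refine Finset.sum_congr rfl fun i _ => ?_
  rw [inner_map_self_of_map_eq_smul (hA i) (b.norm_eq_one i), inner_smul_right, mul_right_comm,
    inner_mul_inner_swap, RCLike.re_ofReal_mul]

theorem sub_diagonalAverage_le (b : OrthonormalBasis ι 𝕜 E) {A B : E →ₗ[𝕜] E} {α β r : ℝ}
    (h : ∀ i, β - RCLike.re ⟪b i, B (b i)⟫_𝕜 ≤ r * (RCLike.re ⟪b i, A (b i)⟫_𝕜 - α))
    {x : E} (hx : ‖x‖ = 1) :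
    β - diagonalAverage b x B ≤ r * (diagonalAverage b x A - α) := by
  have sum_weights : ∑ i, ‖⟪x, b i⟫_𝕜‖ ^ 2 = 1 := by
    rw [b.sum_sq_norm_inner_left, hx, one_pow]
  calc
    β - diagonalAverage b x B
        = ∑ i, ‖⟪x, b i⟫_𝕜‖ ^ 2 * (β - RCLike.re ⟪b i, B (b i)⟫_𝕜) := by
      simp only [mul_sub, Finset.sum_sub_distrib, ← Finset.sum_mul, sum_weights, one_mul,
        diagonalAverage]
    _ ≤ ∑ i, ‖⟪x, b i⟫_𝕜‖ ^ 2 * (r * (RCLike.re ⟪b i, A (b i)⟫_𝕜 - α)) := by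
      gcongr with i
      exact h i
    _ = r * (diagonalAverage b x A - α) := by
      simp only [mul_left_comm _ r, ← Finset.mul_sum, mul_sub, Finset.sum_sub_distrib,
        ← Finset.sum_mul, sum_weights, one_mul, diagonalAverage]

theorem sub_re_inner_map_self_le_of_joint_eigenbasis (b : OrthonormalBasis ι 𝕜 E)
    {A B : E →ₗ[𝕜] E} {a c : ι → 𝕜} (hA : ∀ i, A (b i) = a i • b i)
    (hB : ∀ i, B (b i) = c i • b i) {α β r : ℝ}
    (h : ∀ i, β - RCLike.re (c i) ≤ r * (RCLike.re (a i) - α)) {x : E} (hx : ‖x‖ = 1) :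
    β - RCLike.re ⟪x, B x⟫_𝕜 ≤ r * (RCLike.re ⟪x, A x⟫_𝕜 - α) := by
  rw [← diagonalAverage_eq_re_inner b hA, ← diagonalAverage_eq_re_inner b hB]
  refine sub_diagonalAverage_le b (fun i => ?_) hx
  rw [inner_map_self_of_map_eq_smul (hA i) (b.norm_eq_one i),
    inner_map_self_of_map_eq_smul (hB i) (b.norm_eq_one i)]
  exact h i

theorem diagonal_ensemble_lower_bound_general {H0 V P : E →ₗ[𝕜] E} {ψ : E} (hψ : ‖ψ‖ = 1)
    {ε0 p0 lam : ℝ} (hε0 : RCLike.re ⟪ψ, H0 ψ⟫_𝕜 = ε0)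
    (Ψ : OrthonormalBasis ι 𝕜 E) {Ej : ι → 𝕜} (hΨ : ∀ j, (H0 + V) (Ψ j) = Ej j • Ψ j)
    (hbound : ∀ j, p0 - RCLike.re ⟪Ψ j, P (Ψ j)⟫_𝕜
      ≤ lam * (RCLike.re ⟪Ψ j, H0 (Ψ j)⟫_𝕜 - ε0)) :
    p0 - lam * (RCLike.re ⟪ψ, V ψ⟫_𝕜 - diagonalAverage Ψ ψ V) ≤ diagonalAverage Ψ ψ P := by
  have energy_conservation : diagonalAverage Ψ ψ H0 + diagonalAverage Ψ ψ V
      = ε0 + RCLike.re ⟪ψ, V ψ⟫_𝕜 := by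
    rw [← diagonalAverage_add, diagonalAverage_eq_re_inner Ψ hΨ, LinearMap.add_apply,
      inner_add_right, map_add, hε0]
  have energy_gain : diagonalAverage Ψ ψ H0 - ε0
      = RCLike.re ⟪ψ, V ψ⟫_𝕜 - diagonalAverage Ψ ψ V := by
    linarith
  rw [← energy_gain, sub_le_comm]
  exact sub_diagonalAverage_le Ψ hbound hψ

end DiagonalAverage

/-- Abstract form of the main Theorem's lower bound (diagonal-ensemble version):
if every joint eigenstate of the noninteracting Hamiltonian `H⁰` and the
momentum `P` (with eigenvalues `ε_α`, `p_α`) satisfies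
`p0 − p_α ≤ λ (ε_α − ε₀)`, where `ψ` is a unit joint eigenvector with
eigenvalues `ε₀`, `p0`, then the diagonal-ensemble impurity momentum
`p_∞ = ∑_j |⟨ψ, Ψ_j⟩|² ⟨Ψ_j, P Ψ_j⟩` built from an eigenbasis `(Ψ_j)` of
`H = H⁰ + V` satisfies
`p_∞ ≥ p0 − λ (⟨ψ, V ψ⟩ − ∑_j |⟨ψ, Ψ_j⟩|² ⟨Ψ_j, V Ψ_j⟩)`. -/
theorem diagonal_ensemble_lower_bound
    {E : Type*} [NormedAddCommGroup E] [InnerProductSpace ℂ E]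
    [FiniteDimensional ℂ E]
    {ι ι' : Type*} [Fintype ι] [Fintype ι']
    (H0 V P H : E →ₗ[ℂ] E)
    (hH0 : LinearMap.IsSymmetric H0)
    (hV : LinearMap.IsSymmetric V)
    (hP : LinearMap.IsSymmetric P)
    (hH : H = H0 + V)
    (e : OrthonormalBasis ι ℂ E) (ε p : ι → ℝ)
    (he_H0 : ∀ α, H0 (e α) = (ε α : ℂ) • e α)
    (he_P : ∀ α, P (e α) = (p α : ℂ) • e α)
    (ψ : E) (hψ : ‖ψ‖ = 1) (ε0 p0 : ℝ)
    (hψ_H0 : H0 ψ = (ε0 : ℂ) • ψ)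
    (hψ_P : P ψ = (p0 : ℂ) • ψ)
    (lam : ℝ) (hlam : 0 < lam)
    (hbound : ∀ α, p0 - p α ≤ lam * (ε α - ε0))
    (Ψ : OrthonormalBasis ι' ℂ E) (Ej : ι' → ℝ)
    (hΨ : ∀ j, H (Ψ j) = (Ej j : ℂ) • Ψ j) :
    p0 - lam * ((⟪ψ, V ψ⟫_ℂ).re
        - ∑ j, ‖⟪ψ, Ψ j⟫_ℂ‖ ^ 2 * (⟪Ψ j, V (Ψ j)⟫_ℂ).re)
      ≤ ∑ j, ‖⟪ψ, Ψ j⟫_ℂ‖ ^ 2 * (⟪Ψ j, P (Ψ j)⟫_ℂ).re := by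
  subst hH
  have initial_energy : (⟪ψ, H0 ψ⟫_ℂ).re = ε0 := by
    rw [inner_map_self_of_map_eq_smul hψ_H0 hψ, Complex.ofReal_re]
  exact diagonal_ensemble_lower_bound_general hψ initial_energy Ψ hΨ fun j =>
    sub_re_inner_map_self_le_of_joint_eigenbasis e he_H0 he_P hbound (Ψ.norm_eq_one j)
end
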